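/- arXiv:math/0403495 — 2 statements merged into one kernel-verified Lean document; each statement's English description precedes it below -/
import Mathlib

section
/- Let f : 𝖱^n → 𝖱 be continuous, I ⊆ N = {1,…,n}, and c, c' ∈ 𝖱^{N∖I}. Then the restriction of f to Δ_I(c) is unbounded if and only if the restriction of f to Δ_I(c') is unbounded. -/
noncomputable section
open Set

/-- The first uncountable ordinal `ω₁`. -/
def Omega1 : Ordinal := Ordinal.omega 1

/-- The closed long ray `𝖱`: `ω₁ × [0,1)` with the lexicographic order. -/
def LongRay : Type 1 := {o : Ordinal // o < Omega1} ×ₗ (Set.Ico (0:ℝ) 1)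

instance : LinearOrder LongRay :=
  inferInstanceAs (LinearOrder ({o : Ordinal // o < Omega1} ×ₗ (Set.Ico (0:ℝ) 1)))

/-- `𝖱` carries the order topology. -/
instance : TopologicalSpace LongRay := Preorder.topology LongRay
instance : OrderTopology LongRay := ⟨rfl⟩

lemma omega1_pos : (0 : Ordinal) < Omega1 := Ordinal.omega_pos 1

/-- The point `0 = (0,0)` of the long ray. -/
def rayZero : LongRay := toLex (⟨0, omega1_pos⟩, ⟨0, by simp⟩)

/-- Identification of the countable ordinal `o` with the point `(o,0)` of the long ray
(junk value for `o ≥ ω₁`). -/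
def ordR (o : Ordinal) : LongRay :=
  if h : o < Omega1 then toLex (⟨o, h⟩, ⟨0, by simp⟩) else rayZero

/-- The `I`-diagonal at height `c` (only the values of `c` off `I` are relevant). -/
def Delta (n : ℕ) (I : Finset (Fin n)) (c : Fin n → LongRay) : Set (Fin n → LongRay) :=
  {x | (∀ i ∈ I, ∀ i' ∈ I, x i = x i') ∧ ∀ j ∉ I, x j = c j}

/-- `f` is `I`-cofinal if `f` restricted to `Δ_I = Δ_I(0)` is unbounded. -/
def ICofinal (n : ℕ) (f : (Fin n → LongRay) → LongRay) (I : Finset (Fin n)) : Prop :=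
  ¬ BddAbove (f '' Delta n I (fun _ => rayZero))

/-- The cofinality class `𝔠(f) = {I : f is I-cofinal}`. -/
def cofClass (n : ℕ) (f : (Fin n → LongRay) → LongRay) : Set (Finset (Fin n)) :=
  {I | ICofinal n f I}

/-- `M_I(c) = {x : x_i ≥ c for all i ∈ I}`. -/
def MSet (n : ℕ) (I : Finset (Fin n)) (c : LongRay) : Set (Fin n → LongRay) :=
  {x | ∀ i ∈ I, c ≤ x i}

/-- `E_I(b,d) = {x ∈ M_I(d) : x_j = b_j for all j ∉ I}`. -/
def ESet (n : ℕ) (I : Finset (Fin n)) (b : Fin n → LongRay) (d : LongRay) :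
    Set (Fin n → LongRay) :=
  {x | (∀ i ∈ I, d ≤ x i) ∧ ∀ j ∉ I, x j = b j}

open Filter Topology

namespace LongRay

/-- The countable ordinal below a point of the long ray. -/
def fst (x : LongRay) : {o : Ordinal.{0} // o < Omega1} := (ofLex x).1

/-- The real coordinate of a point of the long ray. -/
def snd (x : LongRay) : Set.Ico (0:ℝ) 1 := (ofLex x).2

/-- The point of the long ray with given coordinates. -/
def mk (a : {o : Ordinal.{0} // o < Omega1}) (t : Set.Ico (0:ℝ) 1) : LongRay := toLex (a, t)

lemma lt_iff {x y : LongRay} : x < y ↔ x.fst < y.fst ∨ x.fst = y.fst ∧ x.snd < y.snd :=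
  Prod.Lex.lt_iff

lemma le_iff {x y : LongRay} : x ≤ y ↔ x.fst < y.fst ∨ x.fst = y.fst ∧ x.snd ≤ y.snd :=
  Prod.Lex.le_iff

lemma rayZero_le (x : LongRay) : rayZero ≤ x := by
  rw [le_iff]
  rcases (show rayZero.fst ≤ x.fst from Subtype.coe_le_coe.1 (zero_le (a := x.fst.1))).lt_or_eq
    with h | h
  · exact Or.inl h
  · exact Or.inr ⟨h, Subtype.coe_le_coe.1 x.snd.2.1⟩

/-- Two points are separated by a point with rational real coordinate over the smaller of the two
ordinals. -/
lemma exists_rat_between {x y : LongRay} (h : x < y) :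
    ∃ (q : ℚ) (hq : (q : ℝ) ∈ Set.Ico (0:ℝ) 1), x < mk x.fst ⟨q, hq⟩ ∧ mk x.fst ⟨q, hq⟩ < y := by
  rcases lt_iff.1 h with h | ⟨h, h'⟩
  · obtain ⟨q, hq, hq'⟩ := exists_rat_btwn x.snd.2.2
    refine ⟨q, ⟨x.snd.2.1.trans hq.le, hq'⟩, lt_iff.2 (Or.inr ⟨rfl, hq⟩), lt_iff.2 (Or.inl h)⟩
  · obtain ⟨q, hq, hq'⟩ := exists_rat_btwn (Subtype.coe_lt_coe.2 h')
    exact ⟨q, ⟨x.snd.2.1.trans hq.le, hq'.trans y.snd.2.2⟩, lt_iff.2 (Or.inr ⟨rfl, hq⟩),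
      lt_iff.2 (Or.inr ⟨h, hq'⟩)⟩

instance : DenselyOrdered LongRay where
  dense _ _ h := let ⟨_, _, h₁, h₂⟩ := exists_rat_between h; ⟨_, h₁, h₂⟩

instance : NoMaxOrder LongRay where
  exists_gt x := by
    obtain ⟨q, hq, hq'⟩ := exists_between x.snd.2.2
    exact ⟨mk x.fst ⟨q, x.snd.2.1.trans hq.le, hq'⟩, lt_iff.2 (Or.inr ⟨rfl, hq⟩)⟩

lemma exists_isGLB {S : Set LongRay} (hS : S.Nonempty) : ∃ m, IsGLB S m := by
  obtain ⟨a, ⟨x₀, hx₀, rfl⟩, hmin⟩ := exists_minimal_of_wellFoundedLT (fun a => a ∈ fst '' S)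
    (hS.image fst)
  have hle : ∀ x ∈ S, x₀.fst ≤ x.fst := fun x hx =>
    not_lt.1 fun h => h.not_ge (hmin ⟨x, hx, rfl⟩ h.le)
  let T : Set ℝ := {t | ∃ x ∈ S, x.fst = x₀.fst ∧ (x.snd : ℝ) = t}
  have hT₀ : (x₀.snd : ℝ) ∈ T := ⟨x₀, hx₀, rfl, rfl⟩
  have hTnonneg : ∀ t ∈ T, 0 ≤ t := by
    rintro _ ⟨x, -, -, rfl⟩
    exact x.snd.2.1
  have hglb : IsGLB T (sInf T) := isGLB_csInf ⟨_, hT₀⟩ ⟨0, hTnonneg⟩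
  refine ⟨mk x₀.fst ⟨sInf T, hglb.2 hTnonneg, (hglb.1 hT₀).trans_lt x₀.snd.2.2⟩, ?_, ?_⟩
  · intro x hx
    rcases (hle x hx).lt_or_eq with h | h
    · exact le_iff.2 (Or.inl h)
    · exact le_iff.2 (Or.inr ⟨h, hglb.1 ⟨x, hx, h.symm, rfl⟩⟩)
  · intro y hy
    rcases le_iff.1 (hy hx₀) with h | ⟨h, -⟩
    · exact le_iff.2 (Or.inl h)
    · refine le_iff.2 (Or.inr ⟨h, hglb.2 ?_⟩)
      rintro _ ⟨x, hx, hxa, rfl⟩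
      rcases le_iff.1 (hy hx) with h' | ⟨-, h'⟩
      · exact absurd (h.trans hxa.symm) h'.ne
      · exact h'

instance : InfSet LongRay where
  sInf S := open Classical in if h : S.Nonempty then (exists_isGLB h).choose else rayZero

lemma sInf_empty_eq : sInf (∅ : Set LongRay) = rayZero := dif_neg Set.not_nonempty_empty

lemma sInf_isGLB {S : Set LongRay} (hS : S.Nonempty) : IsGLB S (sInf S) := by
  simp only [sInf, dif_pos hS]
  exact (exists_isGLB hS).choose_spec

/-- The long ray is conditionally complete. This is not a global instance, so that the order on the
long ray is always found through its `LinearOrder` instance. -/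
abbrev conditionallyCompleteLinearOrder : ConditionallyCompleteLinearOrder LongRay where
  __ := (inferInstance : LinearOrder LongRay)
  __ := conditionallyCompleteLatticeOfsInf LongRay
    (fun a b => ⟨max a b, by simp⟩) (fun a b => ⟨min a b, by simp⟩)
    (fun _ _ hS => sInf_isGLB hS)
  csSup_of_not_bddAbove S hS := by
    have h₁ : upperBounds S = ∅ := Set.not_nonempty_iff_eq_empty.1 hS
    have h₂ : sInf (Set.univ : Set LongRay) = rayZero :=
      le_antisymm ((sInf_isGLB Set.univ_nonempty).1 (Set.mem_univ _)) (rayZero_le _)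
    change sInf (upperBounds S) = sInf (upperBounds ∅)
    rw [h₁, upperBounds_empty, h₂, sInf_empty_eq]
  csInf_of_not_bddBelow S hS := absurd ⟨rayZero, fun x _ => rayZero_le x⟩ hS

instance : PreconnectedSpace LongRay :=
  letI := conditionallyCompleteLinearOrder
  inferInstance

instance : CompactIccSpace LongRay :=
  letI := conditionallyCompleteLinearOrder
  ConditionallyCompleteLinearOrder.toCompactIccSpace LongRay

lemma bddAbove_range_nat (z : ℕ → LongRay) : BddAbove (Set.range z) := by
  have h : ⨆ k, Order.succ (z k).fst.1 < Omega1 :=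
    Ordinal.iSup_lt_omega_one fun k => (Cardinal.isSuccLimit_omega 1).succ_lt (z k).fst.2
  refine ⟨mk ⟨_, h⟩ ⟨0, by simp⟩, Set.forall_mem_range.2 fun k => le_iff.2 (Or.inl ?_)⟩
  exact Subtype.coe_lt_coe.1 ((Order.lt_succ _).trans_le
    (Ordinal.le_iSup (fun k => Order.succ (z k).fst.1) k))

lemma countable_Iic (a : {o : Ordinal.{0} // o < Omega1}) : (Set.Iic a).Countable := by
  have ha : (Set.Iio a.1).Countable := by
    rw [← Cardinal.le_aleph0_iff_set_countable, Cardinal.mk_Iio_ordinal, Cardinal.lift_le_aleph0,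
      ← Order.lt_succ_iff, Cardinal.succ_aleph0]
    exact Cardinal.lt_omega_iff_card_lt.1 a.2
  have ha' : (Set.Iic a.1).Countable := by
    rw [← Set.Iio_insert]
    exact ha.insert _
  exact ha'.preimage_of_injOn Subtype.val_injective.injOn

instance : FirstCountableTopology LongRay where
  nhds_generated_countable x := by
    let Q : Set (Set.Ico (0:ℝ) 1) := {t | ∃ q : ℚ, (q : ℝ) = t}
    let D : Set LongRay := (fun p => mk p.1 p.2) '' (Set.Iic x.fst ×ˢ Q)
    have hD : D.Countable := by
      refine (Set.Countable.prod (countable_Iic _) ?_).image _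
      exact (Set.countable_range ((↑) : ℚ → ℝ)).preimage_of_injOn Subtype.val_injective.injOn
    have hlow : (⨅ b ∈ Set.Iio x, 𝓟 (Set.Ioi b)) = ⨅ s ∈ Set.Ioi '' (D ∩ Set.Iio x), 𝓟 s := by
      rw [iInf_image]
      refine le_antisymm (biInf_mono fun b hb => hb.2) (le_iInf₂ fun b hb => ?_)
      obtain ⟨q, hq, h₁, h₂⟩ := exists_rat_between hb
      refine iInf₂_le_of_le (mk b.fst ⟨q, hq⟩) ⟨⟨(b.fst, ⟨q, hq⟩), ⟨?_, q, rfl⟩, rfl⟩, h₂⟩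
        (principal_mono.2 (Set.Ioi_subset_Ioi h₁.le))
      exact (lt_iff.1 hb).elim le_of_lt fun h => h.1.le
    have hupp : (⨅ b ∈ Set.Ioi x, 𝓟 (Set.Iio b)) = ⨅ s ∈ Set.Iio '' (D ∩ Set.Ioi x), 𝓟 s := by
      rw [iInf_image]
      refine le_antisymm (biInf_mono fun b hb => hb.2) (le_iInf₂ fun b hb => ?_)
      obtain ⟨q, hq, h₁, h₂⟩ := exists_rat_between hb
      exact iInf₂_le_of_le (mk x.fst ⟨q, hq⟩) ⟨⟨(x.fst, ⟨q, hq⟩), ⟨le_refl x.fst, q, rfl⟩, rfl⟩, h₁⟩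
        (principal_mono.2 (Set.Iio_subset_Iio h₂.le))
    rw [nhds_eq_order, hlow, hupp]
    have := isCountablyGenerated_biInf_principal ((hD.mono Set.inter_subset_left).image Set.Ioi :
      (Set.Ioi '' (D ∩ Set.Iio x)).Countable)
    have := isCountablyGenerated_biInf_principal ((hD.mono Set.inter_subset_left).image Set.Iio :
      (Set.Iio '' (D ∩ Set.Ioi x)).Countable)
    infer_instance

end LongRay

/-- If `g` is bounded by `z` on the slice over `u`, then any larger bound works on all nearby slices:
a sequence of counterexamples would lie over a bounded part of the ray, where the tube lemma applies. -/
lemma eventually_forall_le_of_forall_le {X : Type*} [TopologicalSpace X] [FirstCountableTopology X]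
    {g : LongRay × X → LongRay} (hg : Continuous g) {u : X} {z z' : LongRay} (hz : z < z')
    (hu : ∀ x, g (x, u) ≤ z) : ∀ᶠ v in 𝓝 u, ∀ x, g (x, v) ≤ z' := by
  by_contra hcon
  obtain ⟨U, hU⟩ := (𝓝 u).exists_antitone_basis
  have key : ∀ k, ∃ v ∈ U k, ∃ x, z' < g (x, v) := by
    intro k
    by_contra! hk
    exact hcon (mem_of_superset (hU.1.mem_of_mem trivial) hk)
  choose v hvU x hx using key
  obtain ⟨y, hy⟩ := LongRay.bddAbove_range_nat x
  have htube : ∀ᶠ w in 𝓝 u, ∀ t ∈ Set.Icc rayZero y, g (t, w) < z' := by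
    refine isCompact_Icc.eventually_forall_of_forall_eventually fun t _ => ?_
    have := (hg.comp continuous_swap).continuousAt (x := (u, t)) |>.eventually_lt_const
      (show g (t, u) < z' from (hu t).trans_lt hz)
    exact this
  obtain ⟨k, hk⟩ := ((hU.tendsto hvU).eventually htube).exists
  exact (hk (x k) ⟨LongRay.rayZero_le _, hy ⟨k, rfl⟩⟩).not_gt (hx k)

lemma isClopen_setOf_bddAbove {X : Type*} [TopologicalSpace X] [FirstCountableTopology X]
    {g : LongRay × X → LongRay} (hg : Continuous g) :
    IsClopen {u | BddAbove (Set.range fun x => g (x, u))} := by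
  constructor
  · refine IsSeqClosed.isClosed fun v u hv hvu => ?_
    choose z hz using hv
    obtain ⟨y, hy⟩ := LongRay.bddAbove_range_nat z
    refine ⟨y, Set.forall_mem_range.2 fun x => ?_⟩
    have hlim : Tendsto (fun k => g (x, v k)) atTop (𝓝 (g (x, u))) :=
      (hg.tendsto (x, u)).comp (tendsto_const_nhds.prodMk_nhds hvu)
    exact le_of_tendsto' hlim fun k => (hz k ⟨x, rfl⟩).trans (hy ⟨k, rfl⟩)
  · refine isOpen_iff_mem_nhds.2 fun u ⟨z, hz⟩ => ?_
    obtain ⟨z', hz'⟩ := exists_gt z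
    filter_upwards [eventually_forall_le_of_forall_le hg hz' fun x => hz ⟨x, rfl⟩] with v hv
    exact ⟨z', Set.forall_mem_range.2 hv⟩

lemma image_Delta_eq_range (n : ℕ) (f : (Fin n → LongRay) → LongRay) (I : Finset (Fin n))
    (c : Fin n → LongRay) :
    f '' Delta n I c = Set.range fun x => f fun i => if i ∈ I then x else c i := by
  ext w
  constructor
  · rintro ⟨y, ⟨hy, hy'⟩, rfl⟩
    rcases I.eq_empty_or_nonempty with rfl | ⟨i₀, hi₀⟩
    · exact ⟨rayZero, congrArg f (funext fun i => by simp [hy' i])⟩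
    · refine ⟨y i₀, congrArg f (funext fun i => ?_)⟩
      by_cases hi : i ∈ I
      · simpa [hi] using hy _ hi₀ _ hi
      · simp [hi, hy' i]
  · rintro ⟨x, rfl⟩
    exact ⟨_, ⟨fun i hi i' hi' => by simp [hi, hi'], fun j hj => by simp [hj]⟩, rfl⟩

/-- `f` restricted to `Δ_I(c)` is unbounded iff `f` restricted to
`Δ_I(c')` is unbounded. -/
theorem unbounded_on_diagonal_indep_of_height (n : ℕ) (f : (Fin n → LongRay) → LongRay)
    (hf : Continuous f) (I : Finset (Fin n)) (c c' : Fin n → LongRay) :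
    ¬ BddAbove (f '' Delta n I c) ↔ ¬ BddAbove (f '' Delta n I c') := by
  have hg : Continuous fun p : LongRay × (Fin n → LongRay) =>
      f fun i => if i ∈ I then p.1 else p.2 i := by
    refine hf.comp (continuous_pi fun i => ?_)
    by_cases hi : i ∈ I <;> simp only [hi, if_true, if_false] <;> fun_prop
  rw [image_Delta_eq_range, image_Delta_eq_range]
  rcases isClopen_iff.1 (isClopen_setOf_bddAbove hg) with h | h
  · exact iff_of_true (Set.eq_empty_iff_forall_notMem.1 h c) (Set.eq_empty_iff_forall_notMem.1 h c')
  · exact not_congr (iff_of_true (Set.eq_univ_iff_forall.1 h c) (Set.eq_univ_iff_forall.1 h c'))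
end
end

section
/- If a continuous map f : 𝖱^n → 𝖱 is unbounded (i.e., its image is not contained in any [0,z]), then f is N-cofinal, i.e., the restriction of f to the full diagonal Δ_N = {(x,…,x) : x ∈ 𝖱} is unbounded. -/
noncomputable section
open Set

section LongRayOrder

/-- The ordinal part of a point of the long ray. -/
def LongRay.ordPart (a : LongRay) : {o : Ordinal // o < Omega1} :=
  (ofLex (α := {o : Ordinal // o < Omega1} × Set.Ico (0 : ℝ) 1) a).1

/-- The real part of a point of the long ray. -/
def LongRay.realPart (a : LongRay) : Set.Ico (0 : ℝ) 1 :=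
  (ofLex (α := {o : Ordinal // o < Omega1} × Set.Ico (0 : ℝ) 1) a).2

lemma LongRay.le_iff_s8 (a b : LongRay) :
    a ≤ b ↔ a.ordPart < b.ordPart ∨ a.ordPart = b.ordPart ∧ a.realPart ≤ b.realPart :=
  Prod.Lex.toLex_le_toLex (x := ofLex a) (y := ofLex b)

lemma LongRay.lt_iff_s8 (a b : LongRay) :
    a < b ↔ a.ordPart < b.ordPart ∨ a.ordPart = b.ordPart ∧ a.realPart < b.realPart :=
  Prod.Lex.toLex_lt_toLex (x := ofLex a) (y := ofLex b)

/-- The point of the long ray with ordinal part `o` and real part `r`. -/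
def LongRay.mk_s8 (o : {o : Ordinal // o < Omega1}) (r : Set.Ico (0 : ℝ) 1) : LongRay :=
  toLex (o, r)

lemma LongRay.rayZero_le_s8 (a : LongRay) : rayZero ≤ a := by
  rw [LongRay.le_iff_s8]
  rcases (zero_le : 0 ≤ a.ordPart.1).eq_or_lt with h | h
  · exact Or.inr ⟨Subtype.ext h, a.realPart.2.1⟩
  · exact Or.inl h

lemma LongRay.exists_isLUB (s : Set LongRay) (hb : BddAbove s) : ∃ u, IsLUB s u := by
  let O : Set {o : Ordinal // o < Omega1} := (fun u : LongRay => u.ordPart) '' upperBounds s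
  have hO : O.Nonempty := hb.image _
  obtain ⟨u₀, hu₀, hu₀o⟩ := WellFounded.min_mem wellFounded_lt O hO
  have hmin : ∀ u ∈ upperBounds s, u₀.ordPart ≤ u.ordPart := by
    intro u hu
    simp only at hu₀o
    rw [hu₀o]
    exact WellFounded.min_le wellFounded_lt (Set.mem_image_of_mem _ hu)
  let T : Set ℝ := {r | ∃ h : r ∈ Set.Ico (0 : ℝ) 1,
    LongRay.mk_s8 u₀.ordPart ⟨r, h⟩ ∈ upperBounds s}
  have hmem : (u₀.realPart : ℝ) ∈ T := ⟨u₀.realPart.2, hu₀⟩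
  have hTb : BddBelow T := ⟨0, fun r hr => hr.1.1⟩
  have hr : sInf T ∈ Set.Ico (0 : ℝ) 1 :=
    ⟨le_csInf ⟨_, hmem⟩ fun r hr => hr.1.1, (csInf_le hTb hmem).trans_lt u₀.realPart.2.2⟩
  refine ⟨LongRay.mk_s8 u₀.ordPart ⟨sInf T, hr⟩, ?_, ?_⟩
  · intro x hx
    rw [LongRay.le_iff_s8]
    rcases (LongRay.le_iff_s8 _ _).1 (hu₀ hx) with h | ⟨h, -⟩
    · exact Or.inl h
    · refine Or.inr ⟨h, le_csInf ⟨_, hmem⟩ ?_⟩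
      rintro r ⟨hr', hru⟩
      rcases (LongRay.le_iff_s8 _ _).1 (hru hx) with h' | ⟨-, h'⟩
      · exact absurd h h'.ne
      · exact h'
  · intro u hu
    rw [LongRay.le_iff_s8]
    rcases (hmin u hu).lt_or_eq with h | h
    · exact Or.inl h
    · refine Or.inr ⟨h, csInf_le hTb ⟨u.realPart.2, ?_⟩⟩
      rw [h]
      exact hu

open Classical in
instance : SupSet LongRay :=
  ⟨fun s => if h : s.Nonempty ∧ BddAbove s then (LongRay.exists_isLUB s h.2).choose else rayZero⟩

lemma LongRay.isLUB_sSup (s : Set LongRay) (hb : BddAbove s) (hs : s.Nonempty) :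
    IsLUB s (sSup s) := by
  have h : sSup s = (LongRay.exists_isLUB s hb).choose := dif_pos ⟨hs, hb⟩
  rw [h]
  exact (LongRay.exists_isLUB s hb).choose_spec

local instance : ConditionallyCompleteLinearOrder LongRay :=
  { (inferInstance : LinearOrder LongRay),
    conditionallyCompleteLatticeOfLatticeOfsSup LongRay LongRay.isLUB_sSup with
    csSup_of_not_bddAbove := fun s hs => by
      have h₁ : sSup s = rayZero := dif_neg fun h => hs h.2
      have h₂ : sSup (∅ : Set LongRay) = rayZero := dif_neg fun h => Set.not_nonempty_empty h.1
      exact h₁.trans h₂.symm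
    csInf_of_not_bddBelow := fun s hs =>
      absurd ⟨rayZero, fun a _ => LongRay.rayZero_le_s8 a⟩ hs }

lemma LongRay.exists_rat_between_s8 {a b : LongRay} (hab : a < b) :
    ∃ (q : ℚ) (hq : (q : ℝ) ∈ Set.Ico (0 : ℝ) 1),
      a < LongRay.mk_s8 a.ordPart ⟨q, hq⟩ ∧ LongRay.mk_s8 a.ordPart ⟨q, hq⟩ < b := by
  have ha := a.realPart.2
  rcases (LongRay.lt_iff_s8 _ _).1 hab with h | ⟨h, h'⟩
  · obtain ⟨q, hq, hq'⟩ := exists_rat_btwn ha.2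
    exact ⟨q, ⟨ha.1.trans hq.le, hq'⟩, (LongRay.lt_iff_s8 _ _).2 (Or.inr ⟨rfl, hq⟩),
      (LongRay.lt_iff_s8 _ _).2 (Or.inl h)⟩
  · obtain ⟨q, hq, hq'⟩ := exists_rat_btwn (Subtype.coe_lt_coe.2 h')
    exact ⟨q, ⟨ha.1.trans hq.le, hq'.trans b.realPart.2.2⟩,
      (LongRay.lt_iff_s8 _ _).2 (Or.inr ⟨rfl, hq⟩), (LongRay.lt_iff_s8 _ _).2 (Or.inr ⟨h, hq'⟩)⟩

instance : DenselyOrdered LongRay :=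
  ⟨fun _ _ hab => let ⟨_, _, h⟩ := LongRay.exists_rat_between_s8 hab; ⟨_, h⟩⟩

instance : Nonempty LongRay := ⟨rayZero⟩

instance : NoMaxOrder LongRay := by
  refine ⟨fun a => ?_⟩
  have h : Order.succ a.ordPart.1 < Omega1 :=
    (Cardinal.isSuccLimit_omega 1).succ_lt a.ordPart.2
  exact ⟨LongRay.mk_s8 ⟨_, h⟩ ⟨0, by simp⟩,
    (LongRay.lt_iff_s8 _ _).2 (Or.inl (Subtype.coe_lt_coe.1 (Order.lt_succ _)))⟩

lemma LongRay.bddAbove_of_countable {s : Set LongRay} (hs : s.Countable) : BddAbove s := by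
  have : Countable s := hs
  have h : ⨆ x : s, (LongRay.ordPart x.1).1 < Omega1 :=
    Ordinal.iSup_lt_omega_one fun x => (LongRay.ordPart x.1).2
  have hsucc : Order.succ (⨆ x : s, (LongRay.ordPart x.1).1) < Omega1 :=
    (Cardinal.isSuccLimit_omega 1).succ_lt h
  refine ⟨LongRay.mk_s8 ⟨_, hsucc⟩ ⟨0, by simp⟩, fun x hx => ?_⟩
  rw [LongRay.le_iff_s8]
  refine Or.inl (Subtype.coe_lt_coe.1 (Order.lt_succ_of_le ?_))
  have hbdd : BddAbove (Set.range fun x : s => (LongRay.ordPart x.1).1) :=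
    ⟨Omega1, Set.forall_mem_range.2 fun x => (LongRay.ordPart x.1).2.le⟩
  exact le_ciSup hbdd ⟨x, hx⟩

lemma LongRay.countable_Iic_ordinal (o : {o : Ordinal // o < Omega1}) :
    (Set.Iic o).Countable := by
  have hsucc : Order.succ o.1 < Omega1 := (Cardinal.isSuccLimit_omega 1).succ_lt o.2
  have h : (Set.Iio (Order.succ o.1)).Countable := by
    rw [← Cardinal.le_aleph0_iff_set_countable, Cardinal.mk_Iio_ordinal,
      Cardinal.lift_le_aleph0, ← Cardinal.lt_aleph_one_iff]
    exact Cardinal.lt_omega_iff_card_lt.1 hsucc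
  refine (h.preimage Subtype.val_injective).mono fun p hp => ?_
  have hpo : p ≤ o := hp
  exact Order.lt_succ_of_le (Subtype.coe_le_coe.2 hpo)

instance (c : LongRay) : TopologicalSpace.SeparableSpace (Set.Iic c) := by
  let D : Set LongRay := (fun p : {o : Ordinal // o < Omega1} × Set.Ico (0 : ℝ) 1 =>
    LongRay.mk_s8 p.1 p.2) '' (Set.Iic c.ordPart ×ˢ {r : Set.Ico (0 : ℝ) 1 | ∃ q : ℚ, (q : ℝ) = r})
  have hQ : {r : Set.Ico (0 : ℝ) 1 | ∃ q : ℚ, (q : ℝ) = r}.Countable :=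
    (Set.countable_range ((↑) : ℚ → ℝ)).preimage Subtype.val_injective
  have hD : D.Countable := ((LongRay.countable_Iic_ordinal _).prod hQ).image _
  have hD' : ((Subtype.val ⁻¹' D : Set (Set.Iic c)) ∪ {⟨c, Set.self_mem_Iic⟩}).Countable :=
    (hD.preimage Subtype.val_injective).union (Set.countable_singleton _)
  refine ⟨_, hD', ?_⟩
  by_cases hnt : Nontrivial (Set.Iic c)
  · refine dense_of_exists_between fun {a b} hab => ?_
    obtain ⟨q, hq, h₁, h₂⟩ := LongRay.exists_rat_between_s8 (Subtype.coe_lt_coe.2 hab)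
    refine ⟨⟨_, h₂.le.trans b.2⟩, Or.inl ⟨(a.1.ordPart, ⟨q, hq⟩), ⟨?_, q, rfl⟩, rfl⟩, h₁, h₂⟩
    rcases (LongRay.le_iff_s8 _ _).1 a.2 with h | h
    · exact h.le
    · exact h.1.le
  · rw [not_nontrivial_iff_subsingleton] at hnt
    intro x
    rw [Subsingleton.elim x ⟨c, Set.self_mem_Iic⟩]
    exact subset_closure (Or.inr rfl)

instance (c : LongRay) : SecondCountableTopology (Set.Iic c) :=
  .of_separableSpace_orderTopology _

open Filter Topology

/-- A sequence growing at least as fast as a prescribed function converges in the long ray. -/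
lemma LongRay.exists_interleaving (Φ : LongRay → LongRay) (z : LongRay) :
    ∃ (β : ℕ → LongRay) (α : LongRay), (∀ k, z ≤ β k) ∧ z ≤ α ∧
      (∀ k, Φ (β k) ≤ β (k + 1)) ∧ Tendsto β atTop (𝓝 α) := by
  let β : ℕ → LongRay := fun k => Nat.rec z (fun _ b => max b (Φ b)) k
  have hmono : Monotone β := monotone_nat_of_le_succ fun k => le_max_left _ _
  have hbdd : BddAbove (Set.range β) := LongRay.bddAbove_of_countable (Set.countable_range β)
  exact ⟨β, ⨆ k, β k, fun k => hmono (Nat.zero_le k), le_ciSup hbdd 0,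
    fun k => le_max_right _ _, tendsto_atTop_ciSup hmono hbdd⟩

/-- An unbounded continuous self-map takes large values at large arguments. -/
lemma LongRay.exists_ge_of_not_bddAbove {h : LongRay → LongRay} (hh : Continuous h)
    (hu : ¬ BddAbove (Set.range h)) (b : LongRay) : ∃ y, b ≤ y ∧ b ≤ h y := by
  by_contra! hcon
  have hK : BddAbove (h '' Set.Icc rayZero b) := (isCompact_Icc.image hh).bddAbove
  obtain ⟨w, hw⟩ := hK
  refine hu ⟨max w b, ?_⟩
  rintro _ ⟨y, rfl⟩
  rcases le_total b y with hy | hy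
  · exact (hcon y hy).le.trans (le_max_right _ _)
  · exact (hw ⟨y, ⟨LongRay.rayZero_le_s8 y, hy⟩, rfl⟩).trans (le_max_left _ _)

/-- A family of bounded maps, depending continuously on a parameter in a separable space, is
uniformly bounded. -/
lemma LongRay.bddAbove_of_forall_bddAbove {K Y : Type*} [TopologicalSpace K]
    [TopologicalSpace.SeparableSpace K] (g : K → Y → LongRay)
    (hg : ∀ y, Continuous fun s => g s y) (hb : ∀ s, BddAbove (Set.range (g s))) :
    ∃ z, ∀ s y, g s y ≤ z := by
  choose B hB using hb
  obtain ⟨D, hD, hDd⟩ := TopologicalSpace.exists_countable_dense K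
  obtain ⟨z, hz⟩ := LongRay.bddAbove_of_countable (hD.image B)
  refine ⟨z, fun s y => ?_⟩
  have hcl : IsClosed {s | g s y ≤ z} := isClosed_le (hg y) continuous_const
  have hsub : D ⊆ {s | g s y ≤ z} := fun s hs =>
    (hB s ⟨y, rfl⟩).trans (hz ⟨s, hs, rfl⟩)
  exact hcl.closure_subset_iff.2 hsub (hDd s)

/-- A countable family of unbounded continuous self-maps takes large values at a common large
argument. -/
lemma LongRay.exists_common_ge {K : Type*} {D : Set K} (hD : D.Countable)
    (g : K → LongRay → LongRay) (hg : ∀ s, Continuous (g s))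
    (hu : ∀ s ∈ D, ¬ BddAbove (Set.range (g s))) (z : LongRay) :
    ∃ α, z ≤ α ∧ ∀ s ∈ D, z ≤ g s α := by
  have hy : ∀ (b : LongRay) (s : D), ∃ y, b ≤ y ∧ b ≤ g s y := fun b s =>
    LongRay.exists_ge_of_not_bddAbove (hg s) (hu s s.2) b
  choose y hby hgy using hy
  have : Countable D := hD
  choose Φ hΦ using fun b => LongRay.bddAbove_of_countable (Set.countable_range (y b))
  obtain ⟨β, α, hzβ, hzα, hβ, hlim⟩ := LongRay.exists_interleaving Φ z
  refine ⟨α, hzα, fun s hs => ?_⟩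
  have hylim : Tendsto (fun k => y (β k) ⟨s, hs⟩) atTop (𝓝 α) :=
    tendsto_of_tendsto_of_tendsto_of_le_of_le hlim ((tendsto_add_atTop_iff_nat 1).2 hlim)
      (fun k => hby _ _) (fun k => (hΦ (β k) ⟨_, rfl⟩).trans (hβ k))
  exact ge_of_tendsto (((hg s).tendsto α).comp hylim)
    (Eventually.of_forall fun k => (hzβ k).trans (hgy (β k) ⟨s, hs⟩))

/-- If one member of a continuous connected family is unbounded, then all members take large values
at a common large argument. -/
lemma LongRay.exists_uniform_ge {K : Type*} [TopologicalSpace K] [PreconnectedSpace K]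
    [SecondCountableTopology K] (g : K → LongRay → LongRay)
    (hg : Continuous fun p : K × LongRay => g p.1 p.2) {s₀ : K}
    (hs₀ : ¬ BddAbove (Set.range (g s₀))) (z : LongRay) :
    ∃ α, z ≤ α ∧ ∀ s, z ≤ g s α := by
  have hg₁ : ∀ y, Continuous fun s => g s y := fun y =>
    hg.comp (continuous_id.prodMk continuous_const)
  have hg₂ : ∀ s, Continuous (g s) := fun s => hg.comp (continuous_const.prodMk continuous_id)
  have key : ∀ A : Set K, (∀ s ∈ A, ¬ BddAbove (Set.range (g s))) → ∀ z,
      ∃ α, z ≤ α ∧ ∀ s ∈ closure A, z ≤ g s α := by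
    intro A hA z
    obtain ⟨D', hD', hDd⟩ := TopologicalSpace.exists_countable_dense A
    let D : Set K := Subtype.val '' D'
    have hD : D.Countable := hD'.image _
    have hDA : D ⊆ A := Subtype.coe_image_subset A D'
    have hAD : A ⊆ closure D := Subtype.dense_iff.1 hDd
    obtain ⟨α, hα, hDα⟩ := LongRay.exists_common_ge hD g hg₂ (fun s hs => hA s (hDA hs)) z
    have hcl : IsClosed {s | z ≤ g s α} := isClosed_le continuous_const (hg₁ α)
    exact ⟨α, hα, fun s hs =>
      hcl.closure_subset_iff.2 hDα (closure_minimal hAD isClosed_closure hs)⟩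
  let U : Set K := {s | ¬ BddAbove (Set.range (g s))}
  have hUcl : IsClosed U := by
    refine isClosed_of_closure_subset fun s hs ⟨w, hw⟩ => ?_
    obtain ⟨w', hw'⟩ := exists_gt w
    obtain ⟨α, -, hα⟩ := key U (fun _ h => h) w'
    exact absurd ((hα s hs).trans (hw ⟨α, rfl⟩)) hw'.not_ge
  have hUop : IsOpen U := by
    rw [← isClosed_compl_iff]
    refine isClosed_of_closure_subset fun s hs hsU => hsU ?_
    obtain ⟨w, hw⟩ := LongRay.bddAbove_of_forall_bddAbove (K := (Uᶜ : Set K))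
      (fun s => g s.1) (fun y => (hg₁ y).comp continuous_subtype_val) (fun s => not_not.1 s.2)
    refine ⟨w, ?_⟩
    rintro _ ⟨y, rfl⟩
    have hcl : IsClosed {s | g s y ≤ w} := isClosed_le (hg₁ y) continuous_const
    exact hcl.closure_subset_iff.2 (fun s hs => hw ⟨s, hs⟩ y) hs
  have hU : U = Set.univ := IsClopen.eq_univ ⟨hUcl, hUop⟩ ⟨s₀, hs₀⟩
  obtain ⟨α, hα, h⟩ := key U (fun _ h => h) z
  exact ⟨α, hα, fun s => h s (by rw [hU, closure_univ]; trivial)⟩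

/-- A continuous map on the square of the long ray which is unbounded on some vertical line is
unbounded on the diagonal. -/
lemma LongRay.not_bddAbove_diag (g : LongRay → LongRay → LongRay)
    (hg : Continuous fun p : LongRay × LongRay => g p.1 p.2) {s₀ : LongRay}
    (hs₀ : ¬ BddAbove (Set.range (g s₀))) : ¬ BddAbove (Set.range fun t => g t t) := by
  rintro ⟨w, hw⟩
  obtain ⟨w', hw'⟩ := exists_gt w
  have hstep : ∀ b : LongRay, ∃ α, s₀ ≤ b → b ≤ α ∧ b ≤ g b α := by
    intro b
    by_cases hb : s₀ ≤ b
    · have : PreconnectedSpace (Set.Iic b) := Subtype.preconnectedSpace isPreconnected_Iic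
      obtain ⟨α, hα, h⟩ := LongRay.exists_uniform_ge (K := Set.Iic b) (fun s => g s.1)
        (hg.comp ((continuous_subtype_val.comp continuous_fst).prodMk continuous_snd))
        (s₀ := ⟨s₀, hb⟩) hs₀ b
      exact ⟨α, fun _ => ⟨hα, h ⟨b, Set.self_mem_Iic⟩⟩⟩
    · exact ⟨b, fun h => absurd h hb⟩
  choose Φ hΦ using hstep
  obtain ⟨β, α, hzβ, -, hβ, hlim⟩ := LongRay.exists_interleaving Φ (max s₀ w')
  have hsβ : ∀ k, s₀ ≤ β k := fun k => (le_max_left _ _).trans (hzβ k)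
  have hΦlim : Tendsto (fun k => Φ (β k)) atTop (𝓝 α) :=
    tendsto_of_tendsto_of_tendsto_of_le_of_le hlim ((tendsto_add_atTop_iff_nat 1).2 hlim)
      (fun k => (hΦ _ (hsβ k)).1) hβ
  have hge : w' ≤ g α α := ge_of_tendsto ((hg.tendsto (α, α)).comp (hlim.prodMk_nhds hΦlim))
    (Eventually.of_forall fun k => ((le_max_right _ _).trans (hzβ k)).trans (hΦ _ (hsβ k)).2)
  exact absurd (hge.trans (hw ⟨α, rfl⟩)) hw'.not_ge

/-- An unbounded continuous map on a finite power of the long ray is unbounded on the diagonal. -/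
lemma LongRay.not_bddAbove_range_const (n : ℕ) (f : (Fin n → LongRay) → LongRay)
    (hf : Continuous f) (hu : ¬ BddAbove (Set.range f)) :
    ¬ BddAbove (Set.range fun t : LongRay => f fun _ => t) := by
  induction n with
  | zero => exact absurd (Set.finite_range f).bddAbove hu
  | succ n ih =>
    have hins : ∀ i : Fin (n + 1), Continuous fun p : LongRay × (Fin n → LongRay) =>
        f (i.insertNth p.1 p.2) := fun i =>
      hf.comp (Continuous.finInsertNth (A := fun _ => LongRay) i continuous_fst continuous_snd)
    by_cases hslice : ∃ (i : Fin (n + 1)) (c : LongRay),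
        ¬ BddAbove (Set.range fun x : Fin n → LongRay => f (i.insertNth c x))
    · obtain ⟨i, c, hc⟩ := hslice
      have hline := ih _ ((hins i).comp (continuous_const.prodMk continuous_id)) hc
      have hdiag := LongRay.not_bddAbove_diag (fun s t => f (i.insertNth s fun _ => t))
        ((hins i).comp (continuous_fst.prodMk (continuous_pi fun _ => continuous_snd))) hline
      have hconst : ∀ t : LongRay,
          i.insertNth t (fun _ => t) = (fun _ => t : Fin (n + 1) → LongRay) :=
        fun t => Fin.insertNth_eq_iff.2 ⟨rfl, rfl⟩
      simpa only [hconst] using hdiag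
    · push Not at hslice
      have hslab : ∀ (c : LongRay) (i : Fin (n + 1)), ∃ z, ∀ x : Fin (n + 1) → LongRay,
          x i ≤ c → f x ≤ z := by
        intro c i
        obtain ⟨z, hz⟩ := LongRay.bddAbove_of_forall_bddAbove (K := Set.Iic c)
          (fun s (x : Fin n → LongRay) => f (i.insertNth s.1 x))
          (fun x => (hins i).comp (continuous_subtype_val.prodMk continuous_const))
          (fun s => hslice i s.1)
        refine ⟨z, fun x hx => ?_⟩
        have h := hz ⟨x i, hx⟩ (i.removeNth x)
        simpa using h
      choose B hB using hslab
      have hfar : ∀ b : LongRay, ∃ x : Fin (n + 1) → LongRay, b ≤ f x ∧ ∀ i, b ≤ x i := by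
        intro b
        obtain ⟨m, hm⟩ := (Set.finite_range (B b)).bddAbove
        obtain ⟨_, ⟨x, rfl⟩, hx⟩ := not_bddAbove_iff.1 hu (max b m)
        refine ⟨x, (le_max_left _ _).trans hx.le, fun i => ?_⟩
        by_contra! hi
        exact absurd (((hB b i x hi.le).trans (hm ⟨i, rfl⟩)).trans (le_max_right _ _)) hx.not_ge
      choose x hfx hbx using hfar
      choose Φ hΦ using fun b => (Set.finite_range (x b)).bddAbove
      rintro ⟨w, hw⟩
      obtain ⟨w', hw'⟩ := exists_gt w
      obtain ⟨β, α, hzβ, -, hβ, hlim⟩ := LongRay.exists_interleaving Φ w'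
      have hxlim : Tendsto (fun k => x (β k)) atTop (𝓝 fun _ => α) :=
        tendsto_pi_nhds.2 fun i => tendsto_of_tendsto_of_tendsto_of_le_of_le hlim
          ((tendsto_add_atTop_iff_nat 1).2 hlim) (fun k => hbx _ i)
          (fun k => (hΦ (β k) ⟨i, rfl⟩).trans (hβ k))
      have hge : w' ≤ f fun _ => α := ge_of_tendsto ((hf.tendsto _).comp hxlim)
        (Eventually.of_forall fun k => (hzβ k).trans (hfx _))
      exact absurd (hge.trans (hw ⟨α, rfl⟩)) hw'.not_ge

end LongRayOrder

/-- an unbounded continuous map `f : 𝖱ⁿ → 𝖱` is `N`-cofinal. -/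
theorem unbounded_implies_N_cofinal (n : ℕ) (f : (Fin n → LongRay) → LongRay)
    (hf : Continuous f) (hunbd : ¬ BddAbove (Set.range f)) :
    ICofinal n f Finset.univ := by
  refine fun hb => LongRay.not_bddAbove_range_const n f hf hunbd (hb.mono ?_)
  rintro _ ⟨t, rfl⟩
  exact ⟨fun _ => t, ⟨fun _ _ _ _ => rfl, fun j hj => absurd (Finset.mem_univ j) hj⟩, rfl⟩
end
end
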